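/- Let K = ℂ(q) and let A₊, A₋ ∈ M₈(K) be as follows: A₊ has rows (q³, q², q, 0, 1, 0, 0, 0), (q², q, 0, q, 0, 1, 0, 0), (q, 0, q, 1, 0, 0, 1, 0), (0, q, 1, q⁻¹, 0, 0, 0, 1), (1, 0, 0, 0, q, 1, q⁻¹, 0), (0, 1, 0, 0, 1, q⁻¹, 0, q⁻¹), (0, 0, 1, 0, q⁻¹, 0, q⁻¹, q⁻²), (0, 0, 0, 1, 0, q⁻¹, q⁻², q⁻³), and A₋ is obtained from A₊ by replacing q by q⁻¹. Let v₁ = (−1, q, 1, −q, q⁻¹, −1, −q⁻¹, 1) and v₂ = q³·(q³, q², q, 1, 1, q⁻¹, q⁻², q⁻³) in K⁸. If W is a K-subspace of K⁸ with A₊·W ⊆ W and A₋·W ⊆ W, and v₁ ∈ W or v₂ ∈ W, then W = K⁸. -/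

import Mathlib

set_option synthInstance.maxHeartbeats 1000000

/-!
Multiply `A₊` and `A₋` by `q³`: this does not change the invariant subspaces and gives matrices
with entries in `ℤ[q]`. The vectors `q • v₁` and `v₂` also have entries in `ℤ[q]`. For
a starting vector `u`, take the eight vectors
`u, Mu, M²u, M³u, PM²u, PM³u, P²M³u, MP²M³u`, where `P = q³A₊` and `M = q³A₋`. They all lie in `W`
when `u` does, so it is enough that their determinant, a polynomial in `ℤ[q]`, is nonzero
(`eq_top_of_krylov`). Since the determinant commutes with ring homomorphisms, this can be
checked after the specialization `ℤ[q] → ℤ/11`, `q ↦ 2` (`det_krylov_ne_zero`), where an explicit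
inverse matrix is given for each of the two starting vectors.
-/

open Polynomial

/-- The matrix `x³ A₊(x)`, over any commutative ring. -/
def plusMat {R : Type*} [CommRing R] (x : R) : Matrix (Fin 8) (Fin 8) R :=
  !![x^6, x^5, x^4, 0,   x^3, 0,   0,   0;
     x^5, x^4, 0,   x^4, 0,   x^3, 0,   0;
     x^4, 0,   x^4, x^3, 0,   0,   x^3, 0;
     0,   x^4, x^3, x^2, 0,   0,   0,   x^3;
     x^3, 0,   0,   0,   x^4, x^3, x^2, 0;
     0,   x^3, 0,   0,   x^3, x^2, 0,   x^2;
     0,   0,   x^3, 0,   x^2, 0,   x^2, x;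
     0,   0,   0,   x^3, 0,   x^2, x,   1]

/-- The matrix `x³ A₋(x) = x³ A₊(x⁻¹)`, over any commutative ring. -/
def minusMat {R : Type*} [CommRing R] (x : R) : Matrix (Fin 8) (Fin 8) R :=
  !![1,   x,   x^2, 0,   x^3, 0,   0,   0;
     x,   x^2, 0,   x^2, 0,   x^3, 0,   0;
     x^2, 0,   x^2, x^3, 0,   0,   x^3, 0;
     0,   x^2, x^3, x^4, 0,   0,   0,   x^3;
     x^3, 0,   0,   0,   x^2, x^3, x^4, 0;
     0,   x^3, 0,   0,   x^3, x^4, 0,   x^4;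
     0,   0,   x^3, 0,   x^4, 0,   x^4, x^5;
     0,   0,   0,   x^3, 0,   x^4, x^5, x^6]

/-- The vector `x • v₁(x)`. -/
def vecOne {R : Type*} [CommRing R] (x : R) : Fin 8 → R :=
  ![-x, x^2, x, -x^2, 1, -x, -1, x]

/-- The vector `v₂(x)`. -/
def vecTwo {R : Type*} [CommRing R] (x : R) : Fin 8 → R :=
  ![x^6, x^5, x^4, x^3, x^3, x^2, x, 1]

/-- The matrix whose rows are eight words in `P` and `M` applied to `u`. -/
def krylov {R : Type*} [CommRing R] (P M : Matrix (Fin 8) (Fin 8) R) (u : Fin 8 → R) :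
    Matrix (Fin 8) (Fin 8) R :=
  Matrix.of ![u, M.mulVec u, M.mulVec (M.mulVec u), M.mulVec (M.mulVec (M.mulVec u)),
    P.mulVec (M.mulVec (M.mulVec u)), P.mulVec (M.mulVec (M.mulVec (M.mulVec u))),
    P.mulVec (P.mulVec (M.mulVec (M.mulVec (M.mulVec u)))),
    M.mulVec (P.mulVec (P.mulVec (M.mulVec (M.mulVec (M.mulVec u)))))]

section map
variable {R S : Type*} [CommRing R] [CommRing S] (f : R →+* S)

lemma plusMat_map (x : R) : (plusMat x).map f = plusMat (f x) := by
  ext i j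
  fin_cases i <;> fin_cases j <;> simp [plusMat]

lemma minusMat_map (x : R) : (minusMat x).map f = minusMat (f x) := by
  ext i j
  fin_cases i <;> fin_cases j <;> simp [minusMat]

lemma vecOne_map (x : R) : f ∘ vecOne x = vecOne (f x) := by
  ext i
  fin_cases i <;> simp [vecOne]

lemma vecTwo_map (x : R) : f ∘ vecTwo x = vecTwo (f x) := by
  ext i
  fin_cases i <;> simp [vecTwo]

lemma krylov_map (P M : Matrix (Fin 8) (Fin 8) R) (u : Fin 8 → R) :
    (krylov P M u).map f = krylov (P.map f) (M.map f) (f ∘ u) := by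
  have h (A : Matrix (Fin 8) (Fin 8) R) (w : Fin 8 → R) :
      (A.map f).mulVec (f ∘ w) = f ∘ A.mulVec w := by
    ext i
    exact (RingHom.map_mulVec f A w i).symm
  ext i j
  simp only [krylov, h]
  fin_cases i <;> rfl

end map

/-- If the determinant of the eight words is nonzero after some specialization `ℤ[X] → S`, it is
nonzero in `ℂ(X)`. The starting vector `u` is a family over all commutative rings, required by
`hu` to be compatible with ring homomorphisms out of `ℤ[X]`. -/
lemma det_krylov_ne_zero {S : Type} [CommRing S] (s : S)
    (u : ∀ {R : Type} [CommRing R], R → Fin 8 → R)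
    (hu : ∀ {R : Type} [CommRing R] (f : ℤ[X] →+* R), f ∘ u X = u (f X))
    (h : (krylov (plusMat s) (minusMat s) (u s)).det ≠ 0) :
    (krylov (plusMat (RatFunc.X : RatFunc ℂ)) (minusMat RatFunc.X) (u RatFunc.X)).det ≠ 0 := by
  set g : ℤ[X] →+* RatFunc ℂ :=
    (algebraMap ℂ[X] (RatFunc ℂ)).comp (mapRingHom (Int.castRingHom ℂ)) with hg
  have hginj : Function.Injective g :=
    (RatFunc.algebraMap_injective ℂ).comp (map_injective _ Int.cast_injective)
  have hgX : g X = RatFunc.X := by simp [hg]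
  set e : ℤ[X] →+* S := eval₂RingHom (Int.castRingHom S) s
  have heX : e X = s := by simp [e]
  have hdet : (krylov (plusMat (X : ℤ[X])) (minusMat X) (u X)).det ≠ 0 := by
    intro h0
    apply h
    have := e.map_det (krylov (plusMat (X : ℤ[X])) (minusMat X) (u X))
    rw [RingHom.mapMatrix_apply, krylov_map, plusMat_map, minusMat_map, hu, heX, h0,
      map_zero] at this
    exact this.symm
  have := g.map_det (krylov (plusMat (X : ℤ[X])) (minusMat X) (u X))
  rw [RingHom.mapMatrix_apply, krylov_map, plusMat_map, minusMat_map, hu, hgX] at this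
  rw [← this]
  exact (map_ne_zero_iff g hginj).2 hdet

/-- An invariant subspace containing `u` contains the rows of `krylov P M u`, which span when
the determinant is nonzero. -/
lemma eq_top_of_krylov {K : Type*} [Field K] (P M : Matrix (Fin 8) (Fin 8) K) (u : Fin 8 → K)
    (hdet : (krylov P M u).det ≠ 0) (W : Submodule K (Fin 8 → K))
    (hP : ∀ v ∈ W, P.mulVec v ∈ W) (hM : ∀ v ∈ W, M.mulVec v ∈ W) (hu : u ∈ W) : W = ⊤ := by
  have hrow : ∀ i, krylov P M u i ∈ W := by
    have h1 := hM _ hu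
    have h2 := hM _ h1
    have h3 := hM _ h2
    have h4 := hP _ h2
    have h5 := hP _ h3
    have h6 := hP _ h5
    have h7 := hM _ h6
    intro i
    fin_cases i
    exacts [hu, h1, h2, h3, h4, h5, h6, h7]
  rw [eq_top_iff]
  intro y _
  have hy : y = Matrix.vecMul (Matrix.vecMul y (krylov P M u)⁻¹) (krylov P M u) := by
    rw [Matrix.vecMul_vecMul, Matrix.nonsing_inv_mul _ (isUnit_iff_ne_zero.2 hdet),
      Matrix.vecMul_one]
  rw [hy, Matrix.vecMul_eq_sum]
  exact W.sum_mem fun i _ => W.smul_mem _ (hrow i)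

lemma det_ne_zero_of_mul_eq_one {R : Type*} [CommRing R] [Nontrivial R]
    {A B : Matrix (Fin 8) (Fin 8) R} (h : A * B = 1) : A.det ≠ 0 := by
  intro h0
  have := congrArg Matrix.det h
  simp [h0] at this

lemma det_krylov_vecOne_mod :
    (krylov (plusMat (2 : ZMod 11)) (minusMat 2) (vecOne 2)).det ≠ 0 := by
  have h : krylov (plusMat (2 : ZMod 11)) (minusMat 2) (vecOne 2) *
      !![3, 1, 3, 1, 6, 6, 0, 7;
         9, 0, 7, 2, 0, 0, 6, 7;
         10, 4, 0, 10, 9, 1, 6, 9;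
         2, 6, 3, 8, 3, 7, 1, 8;
         5, 0, 3, 9, 3, 8, 1, 9;
         2, 0, 1, 10, 8, 6, 2, 9;
         2, 3, 2, 9, 6, 4, 7, 10;
         2, 5, 1, 2, 7, 1, 0, 4] = 1 := by decide +kernel
  have : Fact (1 < 11) := ⟨by norm_num⟩
  exact det_ne_zero_of_mul_eq_one h

lemma det_krylov_vecTwo_mod :
    (krylov (plusMat (2 : ZMod 11)) (minusMat 2) (vecTwo 2)).det ≠ 0 := by
  have h : krylov (plusMat (2 : ZMod 11)) (minusMat 2) (vecTwo 2) *
      !![0, 4, 5, 0, 5, 2, 7, 5;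
         5, 0, 3, 5, 0, 4, 3, 9;
         0, 1, 6, 10, 2, 8, 7, 1;
         4, 4, 2, 4, 8, 10, 10, 10;
         2, 9, 2, 4, 8, 0, 10, 10;
         3, 9, 3, 4, 3, 8, 0, 8;
         2, 5, 9, 9, 5, 4, 5, 0;
         8, 7, 9, 0, 4, 2, 10, 9] = 1 := by decide +kernel
  have : Fact (1 < 11) := ⟨by norm_num⟩
  exact det_ne_zero_of_mul_eq_one h

/-- Let K = ℂ(q) and A₊, A₋ ∈ M₈(K) as displayed (A₋ obtained from A₊
by replacing q by q⁻¹). Let v₁ = (−1, q, 1, −q, q⁻¹, −1, −q⁻¹, 1) and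
v₂ = q³·(q³, q², q, 1, 1, q⁻¹, q⁻², q⁻³) in K⁸. If W is a K-subspace of K⁸ with
A₊·W ⊆ W and A₋·W ⊆ W, and v₁ ∈ W or v₂ ∈ W, then W = K⁸. -/
theorem stmt17 (q : RatFunc ℂ) (hq : q = RatFunc.X)
    (Ap Am : Matrix (Fin 8) (Fin 8) (RatFunc ℂ))
    (hAp : Ap = !![q^3, q^2, q,    0,    1,    0,    0,    0;
                   q^2, q,   0,    q,    0,    1,    0,    0;
                   q,   0,   q,    1,    0,    0,    1,    0;
                   0,   q,   1,    q⁻¹,  0,    0,    0,    1;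
                   1,   0,   0,    0,    q,    1,    q⁻¹,  0;
                   0,   1,   0,    0,    1,    q⁻¹,  0,    q⁻¹;
                   0,   0,   1,    0,    q⁻¹,  0,    q⁻¹,  q⁻¹^2;
                   0,   0,   0,    1,    0,    q⁻¹,  q⁻¹^2, q⁻¹^3])
    (hAm : Am = !![q⁻¹^3, q⁻¹^2, q⁻¹,  0,    1,    0,    0,    0;
                   q⁻¹^2, q⁻¹,   0,    q⁻¹,  0,    1,    0,    0;
                   q⁻¹,   0,     q⁻¹,  1,    0,    0,    1,    0;
                   0,     q⁻¹,   1,    q,    0,    0,    0,    1;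
                   1,     0,     0,    0,    q⁻¹,  1,    q,    0;
                   0,     1,     0,    0,    1,    q,    0,    q;
                   0,     0,     1,    0,    q,    0,    q,    q^2;
                   0,     0,     0,    1,    0,    q,    q^2,  q^3])
    (v₁ v₂ : Fin 8 → RatFunc ℂ)
    (hv₁ : v₁ = ![-1, q, 1, -q, q⁻¹, -1, -q⁻¹, 1])
    (hv₂ : v₂ = q^3 • (![q^3, q^2, q, 1, 1, q⁻¹, q⁻¹^2, q⁻¹^3] : Fin 8 → RatFunc ℂ))
    (W : Submodule (RatFunc ℂ) (Fin 8 → RatFunc ℂ))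
    (hWp : ∀ v ∈ W, Ap.mulVec v ∈ W) (hWm : ∀ v ∈ W, Am.mulVec v ∈ W)
    (hv : v₁ ∈ W ∨ v₂ ∈ W) :
    W = ⊤ := by
  have hq0 : q ≠ 0 := hq ▸ RatFunc.X_ne_zero
  have hP : q ^ 3 • Ap = plusMat q := by
    subst hAp
    ext i j
    fin_cases i <;> fin_cases j <;> simp [plusMat] <;> field_simp
  have hM : q ^ 3 • Am = minusMat q := by
    subst hAm
    ext i j
    fin_cases i <;> fin_cases j <;> simp [minusMat] <;> field_simp
  have hWP : ∀ v ∈ W, (plusMat q).mulVec v ∈ W := fun v hvW => by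
    rw [← hP, Matrix.smul_mulVec]
    exact W.smul_mem _ (hWp v hvW)
  have hWM : ∀ v ∈ W, (minusMat q).mulVec v ∈ W := fun v hvW => by
    rw [← hM, Matrix.smul_mulVec]
    exact W.smul_mem _ (hWm v hvW)
  rcases hv with h | h
  · have hu : vecOne q = q • v₁ := by
      subst hv₁
      ext i
      fin_cases i <;> simp [vecOne] <;> field_simp
    refine eq_top_of_krylov _ _ (vecOne q) ?_ W hWP hWM (hu ▸ W.smul_mem _ h)
    subst hq
    exact det_krylov_ne_zero (2 : ZMod 11) vecOne (fun f => vecOne_map f X)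
      det_krylov_vecOne_mod
  · have hu : vecTwo q = v₂ := by
      subst hv₂
      ext i
      fin_cases i <;> simp [vecTwo] <;> field_simp
    refine eq_top_of_krylov _ _ (vecTwo q) ?_ W hWP hWM (hu ▸ h)
    subst hq
    exact det_krylov_ne_zero (2 : ZMod 11) vecTwo (fun f => vecTwo_map f X)
      det_krylov_vecTwo_mod
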